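/- arXiv:2605.27576 — 2 statements merged into one kernel-verified Lean document; each statement's English description precedes it below -/
import Mathlib

section
/- Let h₁, h₂ : ℝⁿ → ℝⁿ with h₁ odd, and suppose V, q, Ψ witness Assumption 3 for (h₁, h₂). Let A ∈ ℝ^{N×N} be a weighted adjacency matrix with Laplacian L, d ∈ ℝ^N a pinning-gain vector with D = diag(d), G = L + D, and fix v_γ ∈ ℝⁿ. Define, for position errors ω₁,…,ω_N ∈ ℝⁿ and velocity errors ν₁,…,ν_N ∈ ℝⁿ (with v_i = ν_i + v_γ), the right-hand sides f_i = h₁(ν_i) and g_i = Σ_j A_ij h₁(ω_j − ω_i) + d_i h₁(−ω_i) + Σ_j A_ij (h₂(v_j) − h₂(v_i)) + d_i (h₂(v_γ) − h₂(v_i)). Then the derivative of V̄ = (1/2) Σ_{i,j} A_ij V(ω_j − ω_i) + Σ_i d_i V(ω_i) + Σ_i V(ν_i) along (f, g) is nonpositive; precisely, (1/2) Σ_{i,j} A_ij ∇V(ω_j − ω_i) · (f_j − f_i) + Σ_i d_i ∇V(ω_i) · f_i + Σ_i ∇V(ν_i) · g_i ≤ −Σ_{i,j} G_ij q(ν_i)ᵀ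 Ψ q(ν_j) ≤ 0. -/
/-!
Write `S i j = ⟪∇V (ν i), h₁ (ω j - ω i)⟫`. The exchange law `⟪∇V α, h₁ β⟫ = ⟪∇V β, h₁ α⟫` and the
oddness of `h₁` turn the derivative of the edge potentials into `-∑ A i j * S i j`, and that of the
pinning potentials into the negative of the pinning `h₁`-terms, so all position terms cancel
against the `h₁`-terms of `g` (`position_terms_cancel`).
What remains is the `h₂`-coupling. Symmetrizing over the undirected edges (`sum_symmetrize`) makes
it a sum of the pairings in the monotonicity inequality of `Assumption3` with `γ = vγ`, and the
pinning terms are the case `β = γ = vγ`, where `∇V 0 = 0` because `0` minimizes `V`. The same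
symmetrization writes the quadratic form of `lap A + diagonal d` as half the sum of the
`Ψ`-energies of the edge differences `q (ν i) - q (ν j)` plus the pinning energies, which are
nonnegative (`sum_lap_add_diagonal_eq_energy`).
-/

open Matrix Filter
open scoped RealInnerProductSpace

/-- A weighted adjacency matrix: symmetric, nonnegative entries, zero diagonal. -/
def IsWeightedAdjMatrix {N : ℕ} (A : Matrix (Fin N) (Fin N) ℝ) : Prop :=
  A.IsSymm ∧ (∀ i j, 0 ≤ A i j) ∧ ∀ i, A i i = 0

/-- The Laplacian of a weighted adjacency matrix (with zero diagonal). -/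
def lap {N : ℕ} (A : Matrix (Fin N) (Fin N) ℝ) : Matrix (Fin N) (Fin N) ℝ :=
  Matrix.diagonal (fun i => ∑ k, A i k) - A

/-- Assumption 3: `V` is `C¹`, positive definite and radially unbounded, `q` is continuous
and vanishes exactly at `0`, `Ψ` is positive definite,
(i) `∇V(α) ⬝ h₁(β) = ∇V(β) ⬝ h₁(α)`, and
(ii) `(∇V(α-γ) - ∇V(β-γ)) ⬝ (h₂ α - h₂ β) ≥ (q(α-γ) - q(β-γ))ᵀ Ψ (q(α-γ) - q(β-γ))`. -/
def Assumption3 {n M : ℕ} (h₁ h₂ : EuclideanSpace ℝ (Fin n) → EuclideanSpace ℝ (Fin n))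
    (V : EuclideanSpace ℝ (Fin n) → ℝ)
    (q : EuclideanSpace ℝ (Fin n) → (Fin M → ℝ))
    (Ψ : Matrix (Fin M) (Fin M) ℝ) : Prop :=
  ContDiff ℝ 1 V ∧ V 0 = 0 ∧ (∀ x, x ≠ 0 → 0 < V x) ∧
    Tendsto V (cocompact _) atTop ∧
    Continuous q ∧ (∀ α, q α = 0 ↔ α = 0) ∧ Ψ.PosDef ∧
    (∀ α β : EuclideanSpace ℝ (Fin n), ⟪gradient V α, h₁ β⟫ = ⟪gradient V β, h₁ α⟫) ∧
    ∀ α β γ : EuclideanSpace ℝ (Fin n),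
      (q (α - γ) - q (β - γ)) ⬝ᵥ Ψ.mulVec (q (α - γ) - q (β - γ)) ≤
        ⟪gradient V (α - γ) - gradient V (β - γ), h₂ α - h₂ β⟫

/-- For symmetric edge weights, the summand can be averaged over the two edge orientations. -/
lemma sum_symmetrize {N : ℕ} {A : Matrix (Fin N) (Fin N) ℝ} (hA : A.IsSymm)
    (F : Fin N → Fin N → ℝ) :
    ∑ i, ∑ j, A i j * F i j = (1 / 2) * ∑ i, ∑ j, A i j * (F i j + F j i) := by
  have h : ∑ i, ∑ j, A i j * F j i = ∑ i, ∑ j, A i j * F i j := by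
    rw [Finset.sum_comm]
    refine Finset.sum_congr rfl fun i _ => Finset.sum_congr rfl fun j _ => ?_
    rw [hA.apply]
  simp only [mul_add, Finset.sum_add_distrib, h]
  ring

lemma sum_lap_add_diagonal_mul {N : ℕ} (A : Matrix (Fin N) (Fin N) ℝ) (d : Fin N → ℝ)
    (B : Fin N → Fin N → ℝ) :
    ∑ i, ∑ j, (lap A + Matrix.diagonal d) i j * B i j =
      ∑ i, ∑ j, A i j * (B i i - B i j) + ∑ i, d i * B i i := by
  rw [← Finset.sum_add_distrib]
  refine Finset.sum_congr rfl fun i _ => ?_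
  simp [lap, Matrix.diagonal_apply, add_mul, sub_mul, mul_sub, Finset.sum_add_distrib,
    Finset.sum_sub_distrib, Finset.sum_mul]

/-- The `Ψ`-weighted quadratic form of `lap A + diagonal d` is a sum of edge energies and pinning
energies. -/
lemma sum_lap_add_diagonal_eq_energy {M N : ℕ} {A : Matrix (Fin N) (Fin N) ℝ} (hA : A.IsSymm)
    (d : Fin N → ℝ) (Ψ : Matrix (Fin M) (Fin M) ℝ) (p : Fin N → Fin M → ℝ) :
    ∑ i, ∑ j, (lap A + Matrix.diagonal d) i j * (p i ⬝ᵥ Ψ.mulVec (p j)) =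
      (1 / 2) * ∑ i, ∑ j, A i j * ((p i - p j) ⬝ᵥ Ψ.mulVec (p i - p j)) +
        ∑ i, d i * (p i ⬝ᵥ Ψ.mulVec (p i)) := by
  rw [sum_lap_add_diagonal_mul A d fun i j => p i ⬝ᵥ Ψ.mulVec (p j),
    sum_symmetrize hA fun i j => p i ⬝ᵥ Ψ.mulVec (p i) - p i ⬝ᵥ Ψ.mulVec (p j)]
  congr 2
  refine Finset.sum_congr rfl fun i _ => Finset.sum_congr rfl fun j _ => ?_
  simp only [Matrix.mulVec_sub, sub_dotProduct, dotProduct_sub]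
  ring

lemma gradient_zero_of_pos {n : ℕ} {V : EuclideanSpace ℝ (Fin n) → ℝ} (h0 : V 0 = 0)
    (hpos : ∀ x, x ≠ 0 → 0 < V x) : gradient V 0 = 0 := by
  have hmin : IsLocalMin V 0 := Eventually.of_forall fun x => by
    rcases eq_or_ne x 0 with rfl | hx
    · exact le_rfl
    · exact h0 ▸ (hpos x hx).le
  simp [gradient, hmin.fderiv_eq_zero]

/-- The derivative of the position potentials is cancelled by the `h₁`-part of the velocity
dynamics; `W` stands for `∇V`. -/
lemma position_terms_cancel {n N : ℕ}
    {h₁ W : EuclideanSpace ℝ (Fin n) → EuclideanSpace ℝ (Fin n)}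
    (hodd : ∀ a, h₁ (-a) = -h₁ a) (hex : ∀ α β, ⟪W α, h₁ β⟫ = ⟪W β, h₁ α⟫)
    {A : Matrix (Fin N) (Fin N) ℝ} (hA : A.IsSymm) (d : Fin N → ℝ)
    (ω ν : Fin N → EuclideanSpace ℝ (Fin n)) :
    (1 / 2) * ∑ i, ∑ j, A i j * ⟪W (ω j - ω i), h₁ (ν j) - h₁ (ν i)⟫ +
        ∑ i, d i * ⟪W (ω i), h₁ (ν i)⟫ +
        (∑ i, ∑ j, A i j * ⟪W (ν i), h₁ (ω j - ω i)⟫ + ∑ i, d i * ⟪W (ν i), h₁ (-ω i)⟫) = 0 := by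
  have hedge : ∀ i j, ⟪W (ω j - ω i), h₁ (ν j) - h₁ (ν i)⟫ =
      -(⟪W (ν i), h₁ (ω j - ω i)⟫ + ⟪W (ν j), h₁ (ω i - ω j)⟫) := by
    intro i j
    rw [inner_sub_right, hex _ (ν j), hex _ (ν i), ← neg_sub (ω j) (ω i), hodd, inner_neg_right]
    ring
  have hpin : ∀ i, ⟪W (ν i), h₁ (-ω i)⟫ = -⟪W (ω i), h₁ (ν i)⟫ := by
    intro i
    rw [hodd, inner_neg_right, hex]
  rw [sum_symmetrize hA fun i j => ⟪W (ν i), h₁ (ω j - ω i)⟫]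
  simp only [hedge, hpin, mul_neg, Finset.sum_neg_distrib]
  ring

/-- Lyapunov dissipation inequality for the second-order protocol under Assumption 3. -/
theorem stmt12 {n M N : ℕ}
    (h₁ h₂ : EuclideanSpace ℝ (Fin n) → EuclideanSpace ℝ (Fin n))
    (hodd : ∀ a, h₁ (-a) = -h₁ a)
    (V : EuclideanSpace ℝ (Fin n) → ℝ)
    (q : EuclideanSpace ℝ (Fin n) → (Fin M → ℝ))
    (Ψ : Matrix (Fin M) (Fin M) ℝ)
    (hassump : Assumption3 h₁ h₂ V q Ψ)
    (A : Matrix (Fin N) (Fin N) ℝ) (hA : IsWeightedAdjMatrix A)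
    (d : Fin N → ℝ) (hd : ∀ i, 0 ≤ d i)
    (vγ : EuclideanSpace ℝ (Fin n))
    (ω ν : Fin N → EuclideanSpace ℝ (Fin n))
    (v : Fin N → EuclideanSpace ℝ (Fin n)) (hv : ∀ i, v i = ν i + vγ)
    (f g : Fin N → EuclideanSpace ℝ (Fin n))
    (hf : ∀ i, f i = h₁ (ν i))
    (hg : ∀ i, g i =
      (∑ j, A i j • h₁ (ω j - ω i)) + d i • h₁ (-ω i) +
        (∑ j, A i j • (h₂ (v j) - h₂ (v i))) + d i • (h₂ vγ - h₂ (v i))) :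
    (1 / 2) * ∑ i, ∑ j, A i j * ⟪gradient V (ω j - ω i), f j - f i⟫ +
          ∑ i, d i * ⟪gradient V (ω i), f i⟫ + ∑ i, ⟪gradient V (ν i), g i⟫ ≤
        -∑ i, ∑ j, (lap A + Matrix.diagonal d) i j * (q (ν i) ⬝ᵥ Ψ.mulVec (q (ν j))) ∧
      -∑ i, ∑ j, (lap A + Matrix.diagonal d) i j * (q (ν i) ⬝ᵥ Ψ.mulVec (q (ν j))) ≤ 0 := by
  obtain ⟨-, hV0, hVpos, -, -, hq, hΨ, hex, hmono⟩ := hassump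
  obtain ⟨hsymm, hnonneg, -⟩ := hA
  have hgrad := gradient_zero_of_pos hV0 hVpos
  have hΨ0 : ∀ x : Fin M → ℝ, 0 ≤ x ⬝ᵥ Ψ.mulVec x := fun x => by
    simpa using hΨ.posSemidef.dotProduct_mulVec_nonneg x
  rw [sum_lap_add_diagonal_eq_energy hsymm d Ψ fun i => q (ν i)]
  refine ⟨?_, ?_⟩
  · have hpos := position_terms_cancel hodd hex hsymm d ω ν
    have hsplit : ∑ i, ⟪gradient V (ν i), g i⟫ =
        (∑ i, ∑ j, A i j * ⟪gradient V (ν i), h₁ (ω j - ω i)⟫ +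
          ∑ i, d i * ⟪gradient V (ν i), h₁ (-ω i)⟫) +
        (∑ i, ∑ j, A i j * ⟪gradient V (ν i), h₂ (v j) - h₂ (v i)⟫ +
          ∑ i, d i * ⟪gradient V (ν i), h₂ vγ - h₂ (v i)⟫) := by
      simp only [← Finset.sum_add_distrib (s := (Finset.univ : Finset (Fin N)))]
      simp only [hg, inner_add_right, inner_sum, real_inner_smul_right, Finset.sum_add_distrib]
      ring
    have hedge : ∑ i, ∑ j, A i j * ⟪gradient V (ν i), h₂ (v j) - h₂ (v i)⟫ ≤
        -((1 / 2) * ∑ i, ∑ j,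
          A i j * ((q (ν i) - q (ν j)) ⬝ᵥ Ψ.mulVec (q (ν i) - q (ν j)))) := by
      rw [sum_symmetrize hsymm fun i j => ⟪gradient V (ν i), h₂ (v j) - h₂ (v i)⟫, ← mul_neg]
      simp only [← Finset.sum_neg_distrib, ← mul_neg]
      refine mul_le_mul_of_nonneg_left (Finset.sum_le_sum fun i _ => Finset.sum_le_sum fun j _ =>
        mul_le_mul_of_nonneg_left ?_ (hnonneg i j)) (by norm_num)
      have h := hmono (v i) (v j) vγ
      simp only [hv, add_sub_cancel_right] at h ⊢
      rw [inner_sub_left] at h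
      simp only [inner_sub_right] at h ⊢
      linarith
    have hpin : ∑ i, d i * ⟪gradient V (ν i), h₂ vγ - h₂ (v i)⟫ ≤
        -∑ i, d i * (q (ν i) ⬝ᵥ Ψ.mulVec (q (ν i))) := by
      simp only [← Finset.sum_neg_distrib, ← mul_neg]
      refine Finset.sum_le_sum fun i _ => mul_le_mul_of_nonneg_left ?_ (hd i)
      have h := hmono (v i) vγ vγ
      simp only [hv, add_sub_cancel_right, sub_self, (hq 0).2 rfl, hgrad, sub_zero] at h ⊢
      simp only [inner_sub_right] at h ⊢
      linarith
    simp only [hf]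
    linarith
  · have h1 : 0 ≤ ∑ i, ∑ j, A i j * ((q (ν i) - q (ν j)) ⬝ᵥ Ψ.mulVec (q (ν i) - q (ν j))) :=
      Finset.sum_nonneg fun i _ => Finset.sum_nonneg fun j _ => mul_nonneg (hnonneg i j) (hΨ0 _)
    have h2 : 0 ≤ ∑ i, d i * (q (ν i) ⬝ᵥ Ψ.mulVec (q (ν i))) :=
      Finset.sum_nonneg fun i _ => mul_nonneg (hd i) (hΨ0 _)
    linarith
end

section
/- Let h₁, h₂ : ℝⁿ → ℝⁿ with h₁ odd, and suppose V, q, Ψ witness Assumption 3 for (h₁, h₂). Fix a weighted adjacency matrix A ∈ ℝ^{N×N}, a pinning-gain vector d ∈ ℝ^N, and v_γ ∈ ℝⁿ. Suppose ω₁,…,ω_N, ν₁,…,ν_N : I → ℝⁿ are differentiable on an interval I and satisfy, for all t ∈ I and all i (with v_i = ν_i + v_γ): ω̇_i = h₁(ν_i) and ν̇_i = Σ_j A_ij h₁(ω_j − ω_i) + d_i h₁(−ω_i) + Σ_j A_ij (h₂(v_j) − h₂(v_i)) + d_i (h₂(v_γ) − h₂(v_i)). Then t ↦ (1/2) Σ_{i,j}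 A_ij V(ω_j(t) − ω_i(t)) + Σ_i d_i V(ω_i(t)) + Σ_i V(ν_i(t)) is nonincreasing on I. -/
/-!
Write `g i = ∇V(νᵢ)`. Differentiating the Lyapunov function along the solution and using the
exchange identity `∇V(α) ⬝ h₁(β) = ∇V(β) ⬝ h₁(α)`, its potential part has derivative
`(1/2) ∑ A i j (g j - g i) ⬝ h₁(ωⱼ - ωᵢ) + ∑ d i (g i ⬝ h₁(ωᵢ))`. Since `A` is symmetric and
`h₁` is odd, summation by parts (`sum_adj_inner_antisymm`) shows that this cancels the `h₁` terms
of `∑ g i ⬝ dνᵢ/dt`. The same summation by parts turns the `h₂` terms into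
`-(1/2) ∑ A i j (g j - g i) ⬝ (h₂ vⱼ - h₂ vᵢ) - ∑ d i (g i - ∇V(0)) ⬝ (h₂ vᵢ - h₂ v_γ)`, where
`∇V(0) = 0` because `V` is minimal at the origin. Each summand is nonpositive by the dissipation
inequality (`Assumption3.inner_nonneg`), so the function is antitone.
-/

open Matrix Filter
open scoped RealInnerProductSpace

/-- Summation by parts over a symmetric weighted graph, for an antisymmetric edge field `p`. -/
lemma sum_adj_inner_antisymm {n N : ℕ} {A : Matrix (Fin N) (Fin N) ℝ} (hA : A.IsSymm)
    (g : Fin N → EuclideanSpace ℝ (Fin n)) (p : Fin N → Fin N → EuclideanSpace ℝ (Fin n))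
    (hp : ∀ i j, p j i = -p i j) :
    (1 / 2) * ∑ i, ∑ j, A i j * ⟪g j - g i, p i j⟫ = -∑ i, ∑ j, A i j * ⟪g i, p i j⟫ := by
  have hswap : ∑ i, ∑ j, A i j * ⟪g j, p i j⟫ = -∑ i, ∑ j, A i j * ⟪g i, p i j⟫ := by
    rw [Finset.sum_comm, ← Finset.sum_neg_distrib]
    refine Finset.sum_congr rfl fun i _ => ?_
    rw [← Finset.sum_neg_distrib]
    refine Finset.sum_congr rfl fun j _ => ?_
    rw [hp i j, hA.apply i j, inner_neg_right, mul_neg]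
  simp only [inner_sub_left, mul_sub, Finset.sum_sub_distrib]
  rw [hswap]
  ring

lemma Assumption3.gradient_zero {n M : ℕ}
    {h₁ h₂ : EuclideanSpace ℝ (Fin n) → EuclideanSpace ℝ (Fin n)}
    {V : EuclideanSpace ℝ (Fin n) → ℝ} {q : EuclideanSpace ℝ (Fin n) → (Fin M → ℝ)}
    {Ψ : Matrix (Fin M) (Fin M) ℝ} (h : Assumption3 h₁ h₂ V q Ψ) : gradient V 0 = 0 := by
  obtain ⟨-, hV0, hVpos, -⟩ := h
  have hmin : IsLocalMin V 0 := by
    refine Eventually.of_forall fun x => ?_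
    rcases eq_or_ne x 0 with rfl | hx
    · exact le_rfl
    · rw [hV0]; exact (hVpos x hx).le
  simp [gradient, hmin.fderiv_eq_zero]

/-- The `h₂` coupling is dissipative relative to `∇V`, since `Ψ` is positive definite; here the
points `a + c`, `b + c` are written relative to the reference point `c`. -/
lemma Assumption3.inner_nonneg {n M : ℕ}
    {h₁ h₂ : EuclideanSpace ℝ (Fin n) → EuclideanSpace ℝ (Fin n)}
    {V : EuclideanSpace ℝ (Fin n) → ℝ} {q : EuclideanSpace ℝ (Fin n) → (Fin M → ℝ)}
    {Ψ : Matrix (Fin M) (Fin M) ℝ} (h : Assumption3 h₁ h₂ V q Ψ)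
    (a b c : EuclideanSpace ℝ (Fin n)) :
    0 ≤ ⟪gradient V a - gradient V b, h₂ (a + c) - h₂ (b + c)⟫ := by
  obtain ⟨-, -, -, -, -, -, hΨ, -, hdiss⟩ := h
  have hle := hdiss (a + c) (b + c) c
  rw [add_sub_cancel_right, add_sub_cancel_right] at hle
  refine le_trans ?_ hle
  simpa using hΨ.posSemidef.dotProduct_mulVec_nonneg (q a - q b)

lemma hasDerivWithinAt_comp_inner_gradient {n : ℕ} {V : EuclideanSpace ℝ (Fin n) → ℝ}
    (hV : Differentiable ℝ V) {x : ℝ → EuclideanSpace ℝ (Fin n)} {x' : EuclideanSpace ℝ (Fin n)}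
    {I : Set ℝ} {t : ℝ} (hx : HasDerivWithinAt x x' I t) :
    HasDerivWithinAt (fun s => V (x s)) ⟪gradient V (x t), x'⟫ I t := by
  have h := (hV (x t)).hasGradientAt.hasFDerivAt.comp_hasDerivWithinAt t hx
  rwa [InnerProductSpace.toDual_apply_apply] at h

/-- Along any solution of the second-order protocol on an interval `I`, the Lyapunov
function `V̄(t) = (1/2) ∑_{i,j} A i j V(ωⱼ(t) - ωᵢ(t)) + ∑ᵢ dᵢ V(ωᵢ(t)) + ∑ᵢ V(νᵢ(t))`
is nonincreasing on `I`. -/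
theorem stmt15 {n M N : ℕ}
    (h₁ h₂ : EuclideanSpace ℝ (Fin n) → EuclideanSpace ℝ (Fin n))
    (hodd : ∀ a, h₁ (-a) = -h₁ a)
    (V : EuclideanSpace ℝ (Fin n) → ℝ)
    (q : EuclideanSpace ℝ (Fin n) → (Fin M → ℝ))
    (Ψ : Matrix (Fin M) (Fin M) ℝ)
    (hassump : Assumption3 h₁ h₂ V q Ψ)
    (A : Matrix (Fin N) (Fin N) ℝ) (hA : IsWeightedAdjMatrix A)
    (d : Fin N → ℝ) (hd : ∀ i, 0 ≤ d i)
    (vγ : EuclideanSpace ℝ (Fin n))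
    (I : Set ℝ) (hI : I.OrdConnected)
    (ω ν : Fin N → ℝ → EuclideanSpace ℝ (Fin n))
    (v : Fin N → ℝ → EuclideanSpace ℝ (Fin n)) (hv : ∀ i t, v i t = ν i t + vγ)
    (hω : ∀ i, ∀ t ∈ I, HasDerivWithinAt (ω i) (h₁ (ν i t)) I t)
    (hν : ∀ i, ∀ t ∈ I, HasDerivWithinAt (ν i)
        ((∑ j, A i j • h₁ (ω j t - ω i t)) + d i • h₁ (-ω i t) +
          (∑ j, A i j • (h₂ (v j t) - h₂ (v i t))) + d i • (h₂ vγ - h₂ (v i t))) I t) :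
    AntitoneOn (fun t =>
      (1 / 2) * ∑ i, ∑ j, A i j * V (ω j t - ω i t) +
        ∑ i, d i * V (ω i t) + ∑ i, V (ν i t)) I := by
  have hVd : Differentiable ℝ V := hassump.1.differentiable one_ne_zero
  obtain ⟨hsymm, hnonneg, -⟩ := hA
  have hexch := hassump.2.2.2.2.2.2.2.1
  set ν' : Fin N → ℝ → EuclideanSpace ℝ (Fin n) := fun i t =>
    (∑ j, A i j • h₁ (ω j t - ω i t)) + d i • h₁ (-ω i t) +
      (∑ j, A i j • (h₂ (v j t) - h₂ (v i t))) + d i • (h₂ vγ - h₂ (v i t)) with hν'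
  have hderiv : ∀ t ∈ I, HasDerivWithinAt (fun t =>
      (1 / 2) * ∑ i, ∑ j, A i j * V (ω j t - ω i t) +
        ∑ i, d i * V (ω i t) + ∑ i, V (ν i t))
      ((1 / 2) * ∑ i, ∑ j, A i j * ⟪gradient V (ω j t - ω i t), h₁ (ν j t) - h₁ (ν i t)⟫ +
        ∑ i, d i * ⟪gradient V (ω i t), h₁ (ν i t)⟫ + ∑ i, ⟪gradient V (ν i t), ν' i t⟫) I t := by
    intro t ht
    refine ((HasDerivWithinAt.const_mul _ ?_).add ?_).add ?_
    · refine HasDerivWithinAt.fun_sum fun i _ => HasDerivWithinAt.fun_sum fun j _ => ?_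
      exact (hasDerivWithinAt_comp_inner_gradient hVd ((hω j t ht).sub (hω i t ht))).const_mul _
    · refine HasDerivWithinAt.fun_sum fun i _ => ?_
      exact (hasDerivWithinAt_comp_inner_gradient hVd (hω i t ht)).const_mul _
    · refine HasDerivWithinAt.fun_sum fun i _ => ?_
      exact hasDerivWithinAt_comp_inner_gradient hVd (hν i t ht)
  refine antitoneOn_of_hasDerivWithinAt_nonpos hI.convex
    (fun t ht => (hderiv t ht).continuousWithinAt)
    (fun t ht => (hderiv t (interior_subset ht)).mono interior_subset) fun t _ => ?_
  have hpot : (1 / 2) * ∑ i, ∑ j,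
        A i j * ⟪gradient V (ω j t - ω i t), h₁ (ν j t) - h₁ (ν i t)⟫ =
      -∑ i, ∑ j, A i j * ⟪gradient V (ν i t), h₁ (ω j t - ω i t)⟫ := by
    rw [← sum_adj_inner_antisymm hsymm _ (fun i j => h₁ (ω j t - ω i t))
      fun i j => by rw [← hodd, neg_sub]]
    simp only [inner_sub_left, inner_sub_right, hexch (_ - _)]
  have hpin : ∑ i, d i * ⟪gradient V (ω i t), h₁ (ν i t)⟫ =
      ∑ i, d i * ⟪gradient V (ν i t), h₁ (ω i t)⟫ :=
    Finset.sum_congr rfl fun i _ => by rw [hexch]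
  have hkin : ∑ i, ⟪gradient V (ν i t), ν' i t⟫ =
      ∑ i, ∑ j, A i j * ⟪gradient V (ν i t), h₁ (ω j t - ω i t)⟫ -
        ∑ i, d i * ⟪gradient V (ν i t), h₁ (ω i t)⟫ +
        ∑ i, ∑ j, A i j * ⟪gradient V (ν i t), h₂ (v j t) - h₂ (v i t)⟫ +
        ∑ i, d i * ⟪gradient V (ν i t), h₂ vγ - h₂ (v i t)⟫ := by
    rw [← Finset.sum_sub_distrib, ← Finset.sum_add_distrib, ← Finset.sum_add_distrib]
    refine Finset.sum_congr rfl fun i _ => ?_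
    simp only [hν', hodd, inner_add_right, inner_sum, real_inner_smul_right, inner_neg_right]
    ring
  have hcoup : ∑ i, ∑ j, A i j * ⟪gradient V (ν i t), h₂ (v j t) - h₂ (v i t)⟫ ≤ 0 := by
    have hparts := sum_adj_inner_antisymm hsymm (fun i => gradient V (ν i t))
      (fun i j => h₂ (v j t) - h₂ (v i t)) fun i j => (neg_sub _ _).symm
    have hpos : 0 ≤ ∑ i, ∑ j, A i j *
        ⟪gradient V (ν j t) - gradient V (ν i t), h₂ (v j t) - h₂ (v i t)⟫ := by
      refine Finset.sum_nonneg fun i _ => Finset.sum_nonneg fun j _ =>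
        mul_nonneg (hnonneg i j) ?_
      rw [hv, hv]
      exact hassump.inner_nonneg _ _ _
    linarith
  have hlead : ∑ i, d i * ⟪gradient V (ν i t), h₂ vγ - h₂ (v i t)⟫ ≤ 0 := by
    refine Finset.sum_nonpos fun i _ => mul_nonpos_of_nonneg_of_nonpos (hd i) ?_
    -- The leader is the agent with zero relative velocity, where the gradient vanishes.
    have hdiss := hassump.inner_nonneg (ν i t) 0 vγ
    rw [hassump.gradient_zero, sub_zero, zero_add, ← hv, ← neg_sub, inner_neg_right] at hdiss
    linarith
  linarith
end
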